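/- Let m ≥ 4 be even and let P = {x_1, x_2, …, x_m} with x_1 < x_2 < ⋯ < x_m be a period-m orbit of f. If f does not interchange the two halves of P, i.e. it is not the case that f maps {x_1, …, x_{m/2}} onto {x_{(m/2)+1}, …, x_m} and maps {x_{(m/2)+1}, …, x_m} onto {x_1, …, x_{m/2}}, then f has a period-(m−1) point. -/

import Mathlib

/-- `x` is a periodic point of `f` with least period `m`. -/
def PeriodPt (f : ℝ → ℝ) (m : ℕ) (x : ℝ) : Prop :=
  f^[m] x = x ∧ ∀ i : ℕ, 0 < i → i < m → f^[i] x ≠ x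

open Function Set

/-!
List the orbit as `x 1 < ⋯ < x m`, and call `[x k, x (k + 1)]` a basic interval. For some `s`, the
points `x s` and `x (s + 1)` are moved towards each other, hence across the gap `[x s, x (s + 1)]`;
this basic interval therefore covers itself. The union of the basic intervals reachable from it in
`n` steps is an interval which grows at every step until it contains the whole orbit, so every basic
interval is reached in exactly `m - 2` steps. If no other basic interval covered `[x s, x (s + 1)]`,
then `f` would send everything left of the gap to its right and vice versa, i.e. interchange the two
halves of the orbit. Otherwise take a basic interval `J` that does: the edge from `J` to
`[x s, x (s + 1)]`, some turns of the self-loop there and a walk from there to its first visit to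
`J` form a loop of length `m - 1` which meets `J` at its two ends only. A periodic point following
this loop has least period `m - 1`: otherwise it would return to `J` too early, while visiting
another basic interval, hence would be a common endpoint, of period `m`.
-/

section Intervals

variable {α δ : Type*} [ConditionallyCompleteLinearOrder α] [TopologicalSpace α] [OrderTopology α]
  [DenselyOrdered α] [LinearOrder δ] [TopologicalSpace δ] [OrderClosedTopology δ]

lemma exists_eq_left_forall_ge {g : α → δ} {u v : α} (huv : u ≤ v)
    (hg : ContinuousOn g (Icc u v)) (hle : g u ≤ g v) :
    ∃ w ∈ Icc u v, g w = g u ∧ ∀ t ∈ Icc w v, g u ≤ g t := by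
  have hcompact : IsCompact (Icc u v ∩ g ⁻¹' {g u}) :=
    isCompact_Icc.of_isClosed_subset
      (hg.preimage_isClosed_of_isClosed isClosed_Icc isClosed_singleton) inter_subset_left
  obtain ⟨w, ⟨hw, hgw⟩, hlast⟩ := hcompact.exists_isGreatest ⟨u, left_mem_Icc.2 huv, rfl⟩
  refine ⟨w, hw, hgw, fun t ht => le_of_not_gt fun hlt => ?_⟩
  have hut : u ≤ t := hw.1.trans ht.1
  obtain ⟨z, hz, hgz⟩ :=
    intermediate_value_Icc ht.2 (hg.mono (Icc_subset_Icc_left hut)) ⟨hlt.le, hle⟩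
  have hzw : z ≤ w := hlast ⟨⟨hut.trans hz.1, hz.2⟩, hgz⟩
  have htw : t = w := le_antisymm (hz.1.trans hzw) ht.1
  exact hlt.ne (htw ▸ hgw)

lemma exists_eq_right_forall_le {g : α → δ} {u v : α} (huv : u ≤ v)
    (hg : ContinuousOn g (Icc u v)) (hle : g u ≤ g v) :
    ∃ w ∈ Icc u v, g w = g v ∧ ∀ t ∈ Icc u w, g t ≤ g v := by
  have hg' : ContinuousOn (OrderDual.toDual ∘ g ∘ OrderDual.ofDual)
      (Icc (OrderDual.toDual v) (OrderDual.toDual u)) := by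
    rw [Icc_toDual]; exact hg
  obtain ⟨w, hw, hgw, hge⟩ := exists_eq_left_forall_ge
    (g := OrderDual.toDual ∘ g ∘ OrderDual.ofDual) (OrderDual.toDual_le_toDual.2 huv) hg' hle
  exact ⟨OrderDual.ofDual w, hw.symm, hgw, fun t ht => hge (OrderDual.toDual t) ht.symm⟩

lemma exists_image_Icc_eq_Icc {g : α → δ} {u v : α} (huv : u ≤ v)
    (hg : ContinuousOn g (Icc u v)) (hle : g u ≤ g v) :
    ∃ u' v', u' ≤ v' ∧ Icc u' v' ⊆ Icc u v ∧ g '' Icc u' v' = Icc (g u) (g v) := by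
  obtain ⟨v', hv', hgv', hub⟩ := exists_eq_right_forall_le huv hg hle
  have hgv : ContinuousOn g (Icc u v') := hg.mono (Icc_subset_Icc_right hv'.2)
  obtain ⟨u', hu', hgu', hlb⟩ := exists_eq_left_forall_ge hv'.1 hgv (hle.trans_eq hgv'.symm)
  refine ⟨u', v', hu'.2, Icc_subset_Icc hu'.1 hv'.2, Subset.antisymm ?_ ?_⟩
  · rintro _ ⟨t, ht, rfl⟩
    exact ⟨hlb t ht, hub t ⟨hu'.1.trans ht.1, ht.2⟩⟩
  · rw [← hgu', ← hgv']
    exact intermediate_value_Icc hu'.2 (hgv.mono (Icc_subset_Icc_left hu'.1))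

lemma exists_image_Icc_eq_uIcc {g : α → δ} {u v : α} (huv : u ≤ v)
    (hg : ContinuousOn g (Icc u v)) :
    ∃ u' v', u' ≤ v' ∧ Icc u' v' ⊆ Icc u v ∧ g '' Icc u' v' = uIcc (g u) (g v) := by
  rcases le_total (g u) (g v) with hle | hge
  · simpa only [uIcc_of_le hle] using exists_image_Icc_eq_Icc huv hg hle
  · obtain ⟨u', v', huv', hsub, himage⟩ :=
      exists_image_Icc_eq_Icc (g := OrderDual.toDual ∘ g) huv hg hge
    refine ⟨u', v', huv', hsub, ?_⟩
    rw [comp_apply, comp_apply, Icc_toDual] at himage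
    rwa [uIcc_of_ge hge]

lemma exists_image_Icc_eq_of_surjOn {g : α → δ} {a b : α} {c d : δ} (hcd : c ≤ d)
    (hg : ContinuousOn g (Icc a b)) (hsurj : SurjOn g (Icc a b) (Icc c d)) :
    ∃ u v, u ≤ v ∧ Icc u v ⊆ Icc a b ∧ g '' Icc u v = Icc c d := by
  obtain ⟨p, hp, rfl⟩ := hsurj (left_mem_Icc.2 hcd)
  obtain ⟨q, hq, rfl⟩ := hsurj (right_mem_Icc.2 hcd)
  rw [← uIcc_of_le hcd]
  rcases le_total p q with hpq | hqp
  · have hsub : Icc p q ⊆ Icc a b := Icc_subset_Icc hp.1 hq.2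
    obtain ⟨u, v, huv, huv', himage⟩ := exists_image_Icc_eq_uIcc hpq (hg.mono hsub)
    exact ⟨u, v, huv, huv'.trans hsub, himage⟩
  · have hsub : Icc q p ⊆ Icc a b := Icc_subset_Icc hq.1 hp.2
    obtain ⟨u, v, huv, huv', himage⟩ := exists_image_Icc_eq_uIcc hqp (hg.mono hsub)
    exact ⟨u, v, huv, huv'.trans hsub, himage.trans (uIcc_comm _ _)⟩

lemma exists_Icc_itinerary {f : α → α} (n : ℕ) {L R : ℕ → α} (hLR : ∀ i ≤ n, L i ≤ R i)
    (hf : ∀ i < n, ContinuousOn f (Icc (L i) (R i)))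
    (hcov : ∀ i < n, SurjOn f (Icc (L i) (R i)) (Icc (L (i + 1)) (R (i + 1)))) :
    ∃ u v, u ≤ v ∧ (∀ i ≤ n, MapsTo f^[i] (Icc u v) (Icc (L i) (R i))) ∧
      ContinuousOn f^[n] (Icc u v) ∧ f^[n] '' Icc u v = Icc (L n) (R n) := by
  induction n generalizing L R with
  | zero =>
    refine ⟨L 0, R 0, hLR 0 le_rfl, fun i hi => ?_, continuousOn_id, image_id _⟩
    obtain rfl : i = 0 := Nat.le_zero.1 hi
    exact mapsTo_id _
  | succ n ih =>
    obtain ⟨u', v', huv', hmaps', hcont', himage'⟩ :=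
      ih (L := fun i => L (i + 1)) (R := fun i => R (i + 1))
        (fun i hi => hLR (i + 1) (Nat.succ_le_succ hi))
        (fun i hi => hf (i + 1) (Nat.succ_lt_succ hi))
        (fun i hi => hcov (i + 1) (Nat.succ_lt_succ hi))
    have hsub : Icc u' v' ⊆ Icc (L 1) (R 1) := hmaps' 0 n.zero_le
    obtain ⟨u, v, huv, huvL, himage⟩ := exists_image_Icc_eq_of_surjOn huv' (hf 0 n.succ_pos)
      ((hcov 0 n.succ_pos).mono Subset.rfl hsub)
    have hmaps : MapsTo f (Icc u v) (Icc u' v') := mapsTo_iff_image_subset.2 himage.subset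
    refine ⟨u, v, huv, fun i hi => ?_, hcont'.comp ((hf 0 n.succ_pos).mono huvL) hmaps, ?_⟩
    · cases i with
      | zero => exact huvL
      | succ i => exact (hmaps' i (Nat.le_of_succ_le_succ hi)).comp hmaps
    · rw [iterate_succ, image_comp, himage, himage']

lemma exists_isPeriodicPt_of_surjOn_loop {f : α → α} {n : ℕ} {L R : ℕ → α}
    (hLR : ∀ i ≤ n, L i ≤ R i) (hf : ∀ i < n, ContinuousOn f (Icc (L i) (R i)))
    (hcov : ∀ i < n, SurjOn f (Icc (L i) (R i)) (Icc (L (i + 1)) (R (i + 1))))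
    (hL : L n = L 0) (hR : R n = R 0) :
    ∃ y, IsPeriodicPt f n y ∧ ∀ i ≤ n, f^[i] y ∈ Icc (L i) (R i) := by
  obtain ⟨u, v, huv, hmaps, hcont, himage⟩ := exists_Icc_itinerary n hLR hf hcov
  have hsub : Icc u v ⊆ Icc (L 0) (R 0) := hmaps 0 n.zero_le
  have hsurj : SurjOn f^[n] (Icc u v) (Icc u v) := by
    rw [SurjOn, himage, hL, hR]; exact hsub
  obtain ⟨y, hy, hfix⟩ := exists_mem_Icc_isFixedPt_of_surjOn hcont huv hsurj
  exact ⟨y, hfix, fun i hi => hmaps i hi hy⟩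

end Intervals

section Walks

variable {β : Type*} {r : β → β → Prop} {n : ℕ} {u v w : β}

/-- There is a walk of exactly `n` steps from `u` to `v` in the directed graph with edge relation
`r`. The walk is a sequence `K` of which only the terms `K 0, …, K n` matter. -/
def StepsTo (r : β → β → Prop) (n : ℕ) (u v : β) : Prop :=
  ∃ K : ℕ → β, K 0 = u ∧ K n = v ∧ ∀ i < n, r (K i) (K (i + 1))

lemma StepsTo.refl (r : β → β → Prop) (u : β) : StepsTo r 0 u u :=
  ⟨fun _ => u, rfl, rfl, fun _ hi => absurd hi (Nat.not_lt_zero _)⟩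

lemma StepsTo.head (huv : r u v) (h : StepsTo r n v w) : StepsTo r (n + 1) u w := by
  obtain ⟨K, rfl, rfl, hK⟩ := h
  refine ⟨fun i => Nat.casesOn i u K, rfl, rfl, fun i hi => ?_⟩
  cases i with
  | zero => exact huv
  | succ i => exact hK i (Nat.lt_of_succ_lt_succ hi)

lemma StepsTo.tail (h : StepsTo r n u v) (hvw : r v w) : StepsTo r (n + 1) u w := by
  obtain ⟨K, rfl, rfl, hK⟩ := h
  refine ⟨fun i => if i ≤ n then K i else w, by simp, by simp, fun i hi => ?_⟩
  rcases (Nat.lt_succ_iff.1 hi).lt_or_eq with hlt | rfl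
  · simpa [hlt.le, Nat.succ_le_of_lt hlt] using hK i hlt
  · simpa using hvw

/-- Waiting at the self-loop at `u` turns a walk from `u` to `v` into one of the same length that
reaches `v` for the first time at its end. -/
lemma StepsTo.exists_first_visit (h : StepsTo r n u v) (huu : r u u) (huv : u ≠ v) :
    ∃ K : ℕ → β, K 0 = u ∧ K n = v ∧ (∀ i < n, r (K i) (K (i + 1))) ∧ ∀ i < n, K i ≠ v := by
  classical
  obtain ⟨K, hK0, hKn, hK⟩ := h
  have hvisit : ∃ t, K t = v := ⟨n, hKn⟩
  obtain ⟨t, ht, hfirst, htn⟩ : ∃ t, K t = v ∧ (∀ i < t, K i ≠ v) ∧ t ≤ n :=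
    ⟨Nat.find hvisit, Nat.find_spec hvisit, fun i => Nat.find_min hvisit,
      Nat.find_min' hvisit hKn⟩
  have htpos : 0 < t := Nat.pos_of_ne_zero fun h0 => huv (by rw [← hK0, ← ht, h0])
  -- Truncated subtraction: the new walk stays at `K 0 = u` for the first `n - t` steps.
  refine ⟨fun i => K (i + t - n), ?_, ?_, fun i hi => ?_, fun i hi => hfirst _ (by omega)⟩
  · simpa only [show 0 + t - n = 0 by omega] using hK0
  · simpa only [show n + t - n = t by omega] using ht
  · rcases le_or_gt n (i + t) with hle | hlt
    · simpa only [show i + 1 + t - n = i + t - n + 1 by omega] using hK (i + t - n) (by omega)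
    · simpa only [show i + t - n = 0 by omega, show i + 1 + t - n = 0 by omega, hK0] using huu

lemma StepsTo.exists_simple_loop (h : StepsTo r n u v) (huu : r u u) (hvu : r v u) (huv : u ≠ v) :
    ∃ K : ℕ → β, K 0 = v ∧ K (n + 1) = v ∧ (∀ i < n + 1, r (K i) (K (i + 1))) ∧
      ∀ i, 0 < i → i < n + 1 → K i ≠ v := by
  obtain ⟨K, hK0, hKn, hK, hne⟩ := h.exists_first_visit huu huv
  refine ⟨fun i => Nat.casesOn i v K, rfl, hKn, fun i hi => ?_, fun i hpos hi => ?_⟩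
  · cases i with
    | zero => exact (congrArg (r v) hK0).mpr hvu
    | succ i => exact hK i (Nat.lt_of_succ_lt_succ hi)
  · cases i with
    | zero => exact absurd hpos (lt_irrefl 0)
    | succ i => exact hne i (Nat.lt_of_succ_lt_succ hi)

end Walks

lemma exists_mem_Ico_and_not_succ {p : ℕ → Prop} {i j : ℕ} (hij : i ≤ j) (hi : p i) (hj : ¬ p j) :
    ∃ k ∈ Ico i j, p k ∧ ¬ p (k + 1) := by
  by_contra! hstep
  have hall : ∀ k, i ≤ k → k ≤ j → p k := fun k hik =>
    Nat.le_induction (fun _ => hi)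
      (fun k hik ih hkj => hstep k ⟨hik, hkj⟩ (ih (Nat.le_of_succ_le hkj))) k hik
  exact hj (hall j hij le_rfl)

/-- The points `x 1 < ⋯ < x m` are the elements of a period-`m` orbit of `f`, listed in increasing
order; `x 0` and `x i` for `i > m` are arbitrary. -/
structure IsOrderedOrbit {α : Type*} [Preorder α] (f : α → α) (m : ℕ) (x : ℕ → α) : Prop where
  strictMonoOn : StrictMonoOn x (Icc 1 m)
  range_iterate : ∀ y ∈ x '' Icc 1 m, range (f^[·] y) = x '' Icc 1 m
  minimalPeriod_eq : ∀ y ∈ x '' Icc 1 m, minimalPeriod f y = m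

/-- The edge relation of the Markov graph of the points `x 1 < ⋯ < x m` under `f`: its vertices are
the indices `k` of the basic intervals `[x k, x (k + 1)]`, `1 ≤ k < m`, and there is an edge from
`j` to `k` if `f` maps the `j`-th basic interval over the `k`-th one. -/
def MarkovEdge {α : Type*} [Preorder α] (f : α → α) (m : ℕ) (x : ℕ → α) (j k : ℕ) : Prop :=
  j ∈ Ico 1 m ∧ k ∈ Ico 1 m ∧ SurjOn f (Icc (x j) (x (j + 1))) (Icc (x k) (x (k + 1)))

lemma image_eq_of_surjOn_union {β : Type*} {f : β → β} {A B : Set β}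
    (hsurj : SurjOn f (A ∪ B) (A ∪ B)) (hAB : MapsTo f A B) (hBA : MapsTo f B A)
    (hdisj : Disjoint A B) : f '' A = B := by
  refine hAB.image_subset.antisymm fun b hb => ?_
  obtain ⟨a, ha | ha, rfl⟩ := hsurj (Or.inr hb)
  · exact mem_image_of_mem f ha
  · exact absurd hb (disjoint_left.1 hdisj (hBA ha))

namespace IsOrderedOrbit

section Order

variable {α : Type*} [LinearOrder α] {f : α → α} {m : ℕ} {x : ℕ → α}

lemma of_minimalPeriod_eq {p : α} (hm : 0 < m) (hx : StrictMonoOn x (Icc 1 m))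
    (hp : minimalPeriod f p = m) (horb : x '' Icc 1 m = {y | ∃ i < m, y = f^[i] p}) :
    IsOrderedOrbit f m x := by
  have hpf : p ∈ periodicPts f := minimalPeriod_pos_iff_mem_periodicPts.1 (hp ▸ hm)
  have hmem : ∀ y ∈ x '' Icc 1 m, ∃ i, y = f^[i] p := fun y hy => by
    obtain ⟨i, -, hi⟩ := horb.subset hy
    exact ⟨i, hi⟩
  refine ⟨hx, fun y hy => ?_, fun y hy => ?_⟩
  · obtain ⟨i, rfl⟩ := hmem y hy
    have hif : f^[i] p ∈ periodicPts f := by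
      rwa [← minimalPeriod_pos_iff_mem_periodicPts, minimalPeriod_apply_iterate hpf, hp]
    ext z
    rw [horb, mem_range, ← mem_periodicOrbit_iff hif, periodicOrbit_apply_iterate_eq hpf,
      mem_periodicOrbit_iff hpf]
    constructor
    · rintro ⟨n, rfl⟩
      exact ⟨n % m, Nat.mod_lt n hm, by rw [← hp, iterate_mod_minimalPeriod_eq]⟩
    · rintro ⟨n, -, rfl⟩
      exact ⟨n, rfl⟩
  · obtain ⟨i, rfl⟩ := hmem y hy
    rw [minimalPeriod_apply_iterate hpf, hp]

lemma mapsTo (h : IsOrderedOrbit f m x) : MapsTo f (x '' Icc 1 m) (x '' Icc 1 m) := fun y hy =>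
  (h.range_iterate y hy).subset ⟨1, rfl⟩

lemma surjOn (h : IsOrderedOrbit f m x) : SurjOn f (x '' Icc 1 m) (x '' Icc 1 m) := fun y hy => by
  obtain ⟨i, hi, -⟩ := id hy
  have hm : m - 1 + 1 = m := Nat.sub_add_cancel (hi.1.trans hi.2)
  have hper : f^[m] y = y := by
    simpa only [h.minimalPeriod_eq y hy] using iterate_minimalPeriod (f := f) (x := y)
  refine ⟨f^[m - 1] y, (h.range_iterate y hy).subset ⟨m - 1, rfl⟩, ?_⟩
  rw [← iterate_succ_apply' f, Nat.succ_eq_add_one, hm, hper]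

lemma subset_of_mapsTo (h : IsOrderedOrbit f m x) {T : Set α} (hT : MapsTo f T T) {y : α}
    (hy : y ∈ x '' Icc 1 m) (hyT : y ∈ T) : x '' Icc 1 m ⊆ T := by
  rw [← h.range_iterate y hy]
  rintro _ ⟨n, rfl⟩
  exact hT.iterate n hyT

lemma apply_ne (h : IsOrderedOrbit f m x) (hm : m ≠ 1) {y : α} (hy : y ∈ x '' Icc 1 m) :
    f y ≠ y := fun hfix =>
  hm ((h.minimalPeriod_eq y hy).symm.trans (minimalPeriod_eq_one_iff_isFixedPt.2 hfix))

lemma lt_succ (h : IsOrderedOrbit f m x) {k : ℕ} (hk : k ∈ Ico 1 m) : x k < x (k + 1) :=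
  h.strictMonoOn ⟨hk.1, hk.2.le⟩ ⟨Nat.le_succ_of_le hk.1, hk.2⟩ k.lt_succ_self

lemma succ_le_iff_lt (h : IsOrderedOrbit f m x) {k : ℕ} (hk : k ∈ Ico 1 m) {y : α}
    (hy : y ∈ x '' Icc 1 m) : x (k + 1) ≤ y ↔ x k < y := by
  obtain ⟨i, hi, rfl⟩ := hy
  rw [h.strictMonoOn.le_iff_le ⟨Nat.le_succ_of_le hk.1, hk.2⟩ hi,
    h.strictMonoOn.lt_iff_lt ⟨hk.1, hk.2.le⟩ hi, Nat.succ_le_iff]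

lemma le_iff_lt_succ (h : IsOrderedOrbit f m x) {k : ℕ} (hk : k ∈ Ico 1 m) {y : α}
    (hy : y ∈ x '' Icc 1 m) : y ≤ x k ↔ y < x (k + 1) := by
  rw [← not_lt, ← h.succ_le_iff_lt hk hy, not_le]

lemma mem_Icc (h : IsOrderedOrbit f m x) {y : α} (hy : y ∈ x '' Icc 1 m) :
    y ∈ Icc (x 1) (x m) := by
  obtain ⟨i, hi, rfl⟩ := hy
  have hm : 1 ≤ m := hi.1.trans hi.2
  exact ⟨(h.strictMonoOn.le_iff_le ⟨le_rfl, hm⟩ hi).2 hi.1,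
    (h.strictMonoOn.le_iff_le hi ⟨hm, le_rfl⟩).2 hi.2⟩

lemma Icc_succ_subset (h : IsOrderedOrbit f m x) {k : ℕ} (hk : k ∈ Ico 1 m) :
    Icc (x k) (x (k + 1)) ⊆ Icc (x 1) (x m) :=
  Icc_subset_Icc (h.mem_Icc (mem_image_of_mem x ⟨hk.1, hk.2.le⟩)).1
    (h.mem_Icc (mem_image_of_mem x ⟨Nat.le_succ_of_le hk.1, hk.2⟩)).2

lemma mem_image_of_mem_Icc_succ (h : IsOrderedOrbit f m x) {j k : ℕ} (hj : j ∈ Ico 1 m)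
    (hk : k ∈ Ico 1 m) (hjk : j ≠ k) {y : α} (hyj : y ∈ Icc (x j) (x (j + 1)))
    (hyk : y ∈ Icc (x k) (x (k + 1))) : y ∈ x '' Icc 1 m := by
  wlog hlt : j < k generalizing j k
  · exact this hk hj hjk.symm hyk hyj (hjk.lt_or_gt.resolve_left hlt)
  have hle : x (j + 1) ≤ x k :=
    (h.strictMonoOn.le_iff_le ⟨Nat.le_succ_of_le hj.1, hj.2⟩ ⟨hk.1, hk.2.le⟩).2 hlt
  exact ⟨k, ⟨hk.1, hk.2.le⟩, le_antisymm hyk.1 (hyj.2.trans hle)⟩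

lemma exists_lt_apply_and_apply_succ_lt (h : IsOrderedOrbit f m x) (hm : 1 < m) :
    ∃ s ∈ Ico 1 m, x s < f (x s) ∧ f (x (s + 1)) < x (s + 1) := by
  have h1 : x 1 ∈ x '' Icc 1 m := mem_image_of_mem x ⟨le_rfl, hm.le⟩
  have hm' : x m ∈ x '' Icc 1 m := mem_image_of_mem x ⟨hm.le, le_rfl⟩
  obtain ⟨s, hs, hlt, hnot⟩ := exists_mem_Ico_and_not_succ (p := fun i => x i < f (x i)) hm.le
    ((h.mem_Icc (h.mapsTo h1)).1.lt_of_ne (h.apply_ne hm.ne' h1).symm)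
    (h.mem_Icc (h.mapsTo hm')).2.not_gt
  exact ⟨s, hs, hlt, (not_lt.1 hnot).lt_of_ne
    (h.apply_ne hm.ne' (mem_image_of_mem x ⟨Nat.le_succ_of_le hs.1, hs.2⟩))⟩

lemma exists_apply_notMem_Icc (h : IsOrderedOrbit f m x) {l r : ℕ} (hl : 1 ≤ l) (hlr : l ≤ r)
    (hr : r ≤ m) (hproper : ¬(l = 1 ∧ r = m)) : ∃ i ∈ Icc l r, f (x i) ∉ Icc (x l) (x r) := by
  by_contra! hinv
  have hlm : l ∈ Icc 1 m := ⟨hl, hlr.trans hr⟩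
  have hrm : r ∈ Icc 1 m := ⟨hl.trans hlr, hr⟩
  have hT : MapsTo f (x '' Icc 1 m ∩ Icc (x l) (x r)) (x '' Icc 1 m ∩ Icc (x l) (x r)) := by
    rintro _ ⟨⟨i, hi, rfl⟩, hli, hir⟩
    exact ⟨h.mapsTo (mem_image_of_mem x hi),
      hinv i ⟨(h.strictMonoOn.le_iff_le hlm hi).1 hli, (h.strictMonoOn.le_iff_le hi hrm).1 hir⟩⟩
  have hsub := h.subset_of_mapsTo hT (mem_image_of_mem x hlm)
    ⟨mem_image_of_mem x hlm, left_mem_Icc.2 ((h.strictMonoOn.le_iff_le hlm hrm).2 hlr)⟩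
  have h1m : 1 ≤ m := hl.trans hlm.2
  have h1 : x l ≤ x 1 := (hsub (mem_image_of_mem x ⟨le_rfl, h1m⟩)).2.1
  have hm : x m ≤ x r := (hsub (mem_image_of_mem x ⟨h1m, le_rfl⟩)).2.2
  exact hproper ⟨((h.strictMonoOn.le_iff_le hlm ⟨le_rfl, h1m⟩).1 h1).antisymm hl,
    hr.antisymm ((h.strictMonoOn.le_iff_le ⟨h1m, le_rfl⟩ hrm).1 hm)⟩

lemma eq_div_two_and_image_eq_of_mapsTo (h : IsOrderedOrbit f m x) {s : ℕ} (hs : s ≤ m)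
    (hleft : MapsTo f (x '' Icc 1 s) (x '' Ioc s m))
    (hright : MapsTo f (x '' Ioc s m) (x '' Icc 1 s)) :
    s = m / 2 ∧ f '' (x '' Icc 1 s) = x '' Ioc s m ∧ f '' (x '' Ioc s m) = x '' Icc 1 s := by
  have hunion : Icc 1 s ∪ Ioc s m = Icc 1 m := by
    ext i
    simp only [mem_union, Set.mem_Icc, mem_Ioc]
    omega
  have hinj : InjOn x (Icc 1 s ∪ Ioc s m) := hunion ▸ h.strictMonoOn.injOn
  have hsurj : SurjOn f (x '' Icc 1 s ∪ x '' Ioc s m) (x '' Icc 1 s ∪ x '' Ioc s m) := by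
    rw [← image_union, hunion]; exact h.surjOn
  have hdisj : Disjoint (x '' Icc 1 s) (x '' Ioc s m) := by
    refine disjoint_left.2 ?_
    rintro _ ⟨i, hi, rfl⟩ ⟨j, hj, hij⟩
    obtain rfl := hinj (Or.inr hj) (Or.inl hi) hij
    exact hi.2.not_gt hj.1
  have hB : f '' (x '' Icc 1 s) = x '' Ioc s m :=
    image_eq_of_surjOn_union hsurj hleft hright hdisj
  have hA : f '' (x '' Ioc s m) = x '' Icc 1 s :=
    image_eq_of_surjOn_union (by rwa [union_comm]) hright hleft hdisj.symm
  have hcardA : (x '' Icc 1 s).ncard = s := by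
    rw [(hinj.mono subset_union_left).ncard_image, ncard_eq_toFinset_card', toFinset_Icc,
      Nat.card_Icc, Nat.add_sub_cancel]
  have hcardB : (x '' Ioc s m).ncard = m - s := by
    rw [(hinj.mono subset_union_right).ncard_image, ncard_eq_toFinset_card', toFinset_Ioc,
      Nat.card_Ioc]
  have hle : m - s ≤ s := by
    simpa only [hB, hcardA, hcardB] using ncard_image_le (f := f) ((finite_Icc 1 s).image x)
  have hge : s ≤ m - s := by
    simpa only [hA, hcardA, hcardB] using ncard_image_le (f := f) ((finite_Ioc s m).image x)
  exact ⟨by omega, hB, hA⟩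

end Order

section Continuous

variable {α : Type*} [ConditionallyCompleteLinearOrder α] [TopologicalSpace α] [OrderTopology α]
  [DenselyOrdered α] {f : α → α} {m : ℕ} {x : ℕ → α}

lemma markovEdge_of_subset_uIcc (h : IsOrderedOrbit f m x)
    (hf : ContinuousOn f (Icc (x 1) (x m))) {j k : ℕ} (hj : j ∈ Ico 1 m) (hk : k ∈ Ico 1 m)
    (hsub : Icc (x k) (x (k + 1)) ⊆ uIcc (f (x j)) (f (x (j + 1)))) : MarkovEdge f m x j k := by
  have hle : x j ≤ x (j + 1) := (h.lt_succ hj).le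
  refine ⟨hj, hk, ?_⟩
  exact ((hf.mono (h.Icc_succ_subset hj)).surjOn_uIcc (left_mem_Icc.2 hle)
    (right_mem_Icc.2 hle)).mono Subset.rfl hsub

lemma exists_markovEdge_of_le_of_lt (h : IsOrderedOrbit f m x)
    (hf : ContinuousOn f (Icc (x 1) (x m))) {l r i j k : ℕ} (hl : 1 ≤ l) (hr : r ≤ m)
    (hk : k ∈ Ico 1 m) (hi : i ∈ Icc l r) (hj : j ∈ Icc l r) (hik : f (x i) ≤ x k)
    (hkj : x k < f (x j)) : ∃ t ∈ Ico l r, MarkovEdge f m x t k := by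
  have hup : ∀ t ∈ Icc l r, x k < f (x t) → x (k + 1) ≤ f (x t) := fun t ht =>
    (h.succ_le_iff_lt hk (h.mapsTo (mem_image_of_mem x ⟨hl.trans ht.1, ht.2.trans hr⟩))).2
  rcases le_total i j with hij | hji
  · obtain ⟨t, ht, hle, hgt⟩ :=
      exists_mem_Ico_and_not_succ (p := fun t => f (x t) ≤ x k) hij hik hkj.not_ge
    have htlr : t ∈ Ico l r := ⟨hi.1.trans ht.1, ht.2.trans_le hj.2⟩
    refine ⟨t, htlr, h.markovEdge_of_subset_uIcc hf ⟨hl.trans htlr.1, htlr.2.trans_le hr⟩ hk ?_⟩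
    exact (Icc_subset_Icc hle
      (hup _ ⟨Nat.le_succ_of_le htlr.1, htlr.2⟩ (not_le.1 hgt))).trans Icc_subset_uIcc
  · obtain ⟨t, ht, hgt, hle⟩ :=
      exists_mem_Ico_and_not_succ (p := fun t => x k < f (x t)) hji hkj hik.not_gt
    have htlr : t ∈ Ico l r := ⟨hj.1.trans ht.1, ht.2.trans_le hi.2⟩
    refine ⟨t, htlr, h.markovEdge_of_subset_uIcc hf ⟨hl.trans htlr.1, htlr.2.trans_le hr⟩ hk ?_⟩
    exact (Icc_subset_Icc (not_lt.1 hle)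
      (hup _ (Ico_subset_Icc_self htlr) hgt)).trans Icc_subset_uIcc'

lemma exists_minimalPeriod_eq_of_markovEdge_loop (h : IsOrderedOrbit f m x)
    (hf : ContinuousOn f (Icc (x 1) (x m))) {n : ℕ} {K : ℕ → ℕ} (hn : ¬ m ∣ n)
    (hK : ∀ i < n, MarkovEdge f m x (K i) (K (i + 1))) (hloop : K n = K 0)
    (hsimple : ∀ i, 0 < i → i < n → K i ≠ K 0) :
    ∃ y ∈ Icc (x 1) (x m), minimalPeriod f y = n := by
  have hpos : 0 < n := Nat.pos_of_ne_zero fun h0 => hn (h0 ▸ dvd_zero m)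
  have hvertex : ∀ i ≤ n, K i ∈ Ico 1 m := fun i hi => by
    rcases hi.lt_or_eq with hlt | rfl
    · exact (hK i hlt).1
    · exact hloop ▸ (hK 0 hpos).1
  obtain ⟨y, hy, hitin⟩ := exists_isPeriodicPt_of_surjOn_loop
    (L := fun i => x (K i)) (R := fun i => x (K i + 1))
    (fun i hi => (h.lt_succ (hvertex i hi)).le)
    (fun i hi => hf.mono (h.Icc_succ_subset (hvertex i hi.le)))
    (fun i hi => (hK i hi).2.2) (congrArg x hloop) (congrArg (fun k => x (k + 1)) hloop)
  have hy0 : y ∈ Icc (x (K 0)) (x (K 0 + 1)) := hitin 0 hpos.le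
  refine ⟨y, h.Icc_succ_subset (hvertex 0 hpos.le) hy0, (hy.minimalPeriod_le hpos).antisymm ?_⟩
  by_contra! hlt
  have hyd : y ∈ Icc (x (K (minimalPeriod f y))) (x (K (minimalPeriod f y) + 1)) := by
    simpa only [iterate_minimalPeriod] using hitin _ hlt.le
  have horb : y ∈ x '' Icc 1 m :=
    h.mem_image_of_mem_Icc_succ (hvertex _ hlt.le) (hvertex 0 hpos.le)
      (hsimple _ (hy.minimalPeriod_pos hpos) hlt) hyd hy0
  exact hn (h.minimalPeriod_eq y horb ▸ hy.minimalPeriod_dvd)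

variable {s : ℕ}

lemma markovEdge_self (h : IsOrderedOrbit f m x) (hf : ContinuousOn f (Icc (x 1) (x m)))
    (hs : s ∈ Ico 1 m) (hup : x s < f (x s)) (hdown : f (x (s + 1)) < x (s + 1)) :
    MarkovEdge f m x s s := by
  have hs1 : s + 1 ∈ Icc 1 m := ⟨Nat.le_succ_of_le hs.1, hs.2⟩
  refine h.markovEdge_of_subset_uIcc hf hs hs ((Icc_subset_Icc ?_ ?_).trans Icc_subset_uIcc')
  · exact (h.le_iff_lt_succ hs (h.mapsTo (mem_image_of_mem x hs1))).2 hdown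
  · exact (h.succ_le_iff_lt hs (h.mapsTo (mem_image_of_mem x ⟨hs.1, hs.2.le⟩))).2 hup

lemma exists_markovEdge_adjacent (h : IsOrderedOrbit f m x)
    (hf : ContinuousOn f (Icc (x 1) (x m))) (hup : x s < f (x s))
    (hdown : f (x (s + 1)) < x (s + 1)) {l r : ℕ} (hl : 1 ≤ l) (hr : r ≤ m) (hs : s ∈ Ico l r)
    (hproper : ¬(l = 1 ∧ r = m)) :
    ∃ t ∈ Ico l r, ∃ k, (k + 1 = l ∨ k = r) ∧ MarkovEdge f m x t k := by
  have hindex : ∀ i ∈ Icc l r, i ∈ Icc 1 m := fun i hi => ⟨hl.trans hi.1, hi.2.trans hr⟩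
  have hlr : l ≤ r := hs.1.trans hs.2.le
  have hs1 : s + 1 ∈ Icc l r := ⟨Nat.le_succ_of_le hs.1, hs.2⟩
  obtain ⟨i, hi, hout⟩ := h.exists_apply_notMem_Icc hl hlr hr hproper
  obtain ⟨j, hj, hij⟩ := h.mapsTo (mem_image_of_mem x (hindex i hi))
  rw [← hij, Set.mem_Icc, h.strictMonoOn.le_iff_le (hindex l (left_mem_Icc.2 hlr)) hj,
    h.strictMonoOn.le_iff_le hj (hindex r (right_mem_Icc.2 hlr)), not_and_or, not_le, not_le]
    at hout
  rcases hout with hjl | hrj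
  · have hk : l - 1 ∈ Ico 1 m := ⟨by have := hj.1; omega, by omega⟩
    have hle : f (x i) ≤ x (l - 1) :=
      hij ▸ (h.strictMonoOn.le_iff_le hj ⟨hk.1, hk.2.le⟩).2 (by omega)
    have hlt : x (l - 1) < x s :=
      h.strictMonoOn ⟨hk.1, hk.2.le⟩ (hindex s ⟨hs.1, hs.2.le⟩) (by have := hs.1; omega)
    obtain ⟨t, ht, hedge⟩ :=
      h.exists_markovEdge_of_le_of_lt hf hl hr hk hi ⟨hs.1, hs.2.le⟩ hle (hlt.trans hup)
    exact ⟨t, ht, l - 1, Or.inl (by omega), hedge⟩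
  · have hrm : r ∈ Icc 1 m := hindex r (right_mem_Icc.2 hlr)
    have hlt : x r < f (x i) := hij ▸ h.strictMonoOn hrm hj hrj
    have hle : x (s + 1) ≤ x r := (h.strictMonoOn.le_iff_le (hindex _ hs1) hrm).2 hs.2
    obtain ⟨t, ht, hedge⟩ := h.exists_markovEdge_of_le_of_lt hf hl hr
      ⟨hrm.1, hrj.trans_le hj.2⟩ hs1 hi (hdown.le.trans hle) hlt
    exact ⟨t, ht, r, Or.inr rfl, hedge⟩

lemma exists_stepsTo_of_mem_Ico (h : IsOrderedOrbit f m x)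
    (hf : ContinuousOn f (Icc (x 1) (x m))) (hs : s ∈ Ico 1 m) (hup : x s < f (x s))
    (hdown : f (x (s + 1)) < x (s + 1)) (n : ℕ) (hn : n + 2 ≤ m) :
    ∃ l r, 1 ≤ l ∧ r ≤ m ∧ s ∈ Ico l r ∧ l + n + 1 ≤ r ∧
      ∀ k ∈ Ico l r, StepsTo (MarkovEdge f m x) n s k := by
  induction n with
  | zero =>
    refine ⟨s, s + 1, hs.1, hs.2, ⟨le_rfl, s.lt_succ_self⟩, le_rfl, fun k hk => ?_⟩
    obtain rfl : s = k := hk.1.antisymm (Nat.lt_succ_iff.1 hk.2)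
    exact StepsTo.refl _ s
  | succ n ih =>
    obtain ⟨l, r, hl, hr, hslr, hlen, hreach⟩ := ih (Nat.le_of_succ_le hn)
    have hstay : ∀ k ∈ Ico l r, StepsTo (MarkovEdge f m x) (n + 1) s k := fun k hk =>
      StepsTo.head (h.markovEdge_self hf hs hup hdown) (hreach k hk)
    by_cases hfull : l = 1 ∧ r = m
    · exact ⟨l, r, hl, hr, hslr, by omega, hstay⟩
    obtain ⟨t, ht, k, hk, hedge⟩ :=
      h.exists_markovEdge_adjacent hf hup hdown hl hr hslr hfull
    have hnew : StepsTo (MarkovEdge f m x) (n + 1) s k := (hreach t ht).tail hedge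
    rcases hk with rfl | rfl
    · refine ⟨k, r, hedge.2.1.1, hr, ⟨Nat.le_of_succ_le hslr.1, hslr.2⟩, by omega,
        fun i hi => ?_⟩
      rcases hi.1.eq_or_lt with rfl | hlt
      · exact hnew
      · exact hstay i ⟨hlt, hi.2⟩
    · refine ⟨l, k + 1, hl, hedge.2.1.2, ⟨hslr.1, Nat.lt_succ_of_lt hslr.2⟩, by omega,
        fun i hi => ?_⟩
      rcases (Nat.lt_succ_iff.1 hi.2).eq_or_lt with rfl | hlt
      · exact hnew
      · exact hstay i ⟨hi.1, hlt⟩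

lemma exists_ne_markovEdge (h : IsOrderedOrbit f m x) (hf : ContinuousOn f (Icc (x 1) (x m)))
    (hs : s ∈ Ico 1 m) (hup : x s < f (x s)) (hdown : f (x (s + 1)) < x (s + 1))
    (hswap : ¬(f '' (x '' Icc 1 (m / 2)) = x '' Ioc (m / 2) m ∧
      f '' (x '' Ioc (m / 2) m) = x '' Icc 1 (m / 2))) :
    ∃ j ≠ s, MarkovEdge f m x j s := by
  by_contra! hnone
  have hs1 : s + 1 ∈ Icc 1 m := ⟨Nat.le_succ_of_le hs.1, hs.2⟩
  have hdown' : f (x (s + 1)) ≤ x s :=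
    (h.le_iff_lt_succ hs (h.mapsTo (mem_image_of_mem x hs1))).2 hdown
  have hleft : MapsTo f (x '' Icc 1 s) (x '' Ioc s m) := by
    rintro _ ⟨i, hi, rfl⟩
    obtain ⟨j, hj, hij⟩ := h.mapsTo (mem_image_of_mem x ⟨hi.1, hi.2.trans hs.2.le⟩)
    refine ⟨j, ⟨?_, hj.2⟩, hij⟩
    by_contra! hjs
    have hle : f (x i) ≤ x s := hij ▸ (h.strictMonoOn.le_iff_le hj ⟨hs.1, hs.2.le⟩).2 hjs
    obtain ⟨t, ht, hedge⟩ := h.exists_markovEdge_of_le_of_lt hf le_rfl hs.2.le hs hi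
      (right_mem_Icc.2 hs.1) hle hup
    exact hnone t ht.2.ne hedge
  have hright : MapsTo f (x '' Ioc s m) (x '' Icc 1 s) := by
    rintro _ ⟨i, hi, rfl⟩
    obtain ⟨j, hj, hij⟩ := h.mapsTo (mem_image_of_mem x ⟨hs1.1.trans hi.1, hi.2⟩)
    refine ⟨j, ⟨hj.1, ?_⟩, hij⟩
    by_contra! hsj
    have hlt : x s < f (x i) := hij ▸ h.strictMonoOn ⟨hs.1, hs.2.le⟩ hj hsj
    obtain ⟨t, ht, hedge⟩ := h.exists_markovEdge_of_le_of_lt hf hs1.1 le_rfl hs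
      (left_mem_Icc.2 hs.2) hi hdown' hlt
    exact hnone t (Nat.lt_of_succ_le ht.1).ne' hedge
  obtain ⟨rfl, himage⟩ := h.eq_div_two_and_image_eq_of_mapsTo hs.2.le hleft hright
  exact hswap himage

theorem exists_minimalPeriod_eq_sub_one (h : IsOrderedOrbit f m x) (hm : 1 < m)
    (hf : ContinuousOn f (Icc (x 1) (x m)))
    (hswap : ¬(f '' (x '' Icc 1 (m / 2)) = x '' Ioc (m / 2) m ∧
      f '' (x '' Ioc (m / 2) m) = x '' Icc 1 (m / 2))) :
    ∃ y ∈ Icc (x 1) (x m), minimalPeriod f y = m - 1 := by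
  obtain ⟨s, hs, hup, hdown⟩ := h.exists_lt_apply_and_apply_succ_lt hm
  obtain ⟨j, hjs, hedge⟩ := h.exists_ne_markovEdge hf hs hup hdown hswap
  obtain ⟨l, r, hl, hr, -, hlen, hreach⟩ :=
    h.exists_stepsTo_of_mem_Ico hf hs hup hdown (m - 2) (by omega)
  have hj : j ∈ Ico l r := ⟨by have := hedge.1.1; omega, by have := hedge.1.2; omega⟩
  obtain ⟨K, hK0, hKn, hK, hsimple⟩ := (hreach j hj).exists_simple_loop
    (h.markovEdge_self hf hs hup hdown) hedge hjs.symm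
  rw [show m - 2 + 1 = m - 1 by omega] at hKn hK hsimple
  exact h.exists_minimalPeriod_eq_of_markovEdge_loop hf
    (Nat.not_dvd_of_pos_of_lt (by omega) (by omega)) hK (hKn.trans hK0.symm)
    (hK0.symm ▸ hsimple)

end Continuous

end IsOrderedOrbit

lemma setOf_exists_le_le_eq_image {α : Type*} (x : ℕ → α) (j k : ℕ) :
    {y | ∃ i, j ≤ i ∧ i ≤ k ∧ y = x i} = x '' Icc j k := by
  ext y
  simp only [mem_ofPred_eq, mem_image, mem_Icc, and_assoc, eq_comm]

lemma setOf_exists_lt_le_eq_image {α : Type*} (x : ℕ → α) (j k : ℕ) :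
    {y | ∃ i, j < i ∧ i ≤ k ∧ y = x i} = x '' Ioc j k :=
  setOf_exists_le_le_eq_image x (j + 1) k

lemma periodPt_iff_minimalPeriod_eq {f : ℝ → ℝ} {m : ℕ} (hm : 0 < m) {x : ℝ} :
    PeriodPt f m x ↔ minimalPeriod f x = m := by
  constructor
  · rintro ⟨hx, hne⟩
    have hper : IsPeriodicPt f m x := hx
    exact (hper.minimalPeriod_le hm).antisymm <| not_lt.1 fun hlt =>
      hne _ (hper.minimalPeriod_pos hm) hlt iterate_minimalPeriod
  · rintro rfl
    exact ⟨iterate_minimalPeriod, fun i hpos hlt =>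
      not_isPeriodicPt_of_pos_of_lt_minimalPeriod hpos.ne' hlt⟩

theorem non_swapping_even_orbit_gives_odd_period_general {α : Type*}
    [ConditionallyCompleteLinearOrder α] [TopologicalSpace α] [OrderTopology α] [DenselyOrdered α]
    {I : Set α} (hI : I.OrdConnected) {f : α → α} (hcont : ContinuousOn f I) {m : ℕ} (hm : 1 < m)
    {p : α} (hp : ∀ i, f^[i] p ∈ I) (hper : minimalPeriod f p = m)
    {x : ℕ → α} (hmono : ∀ i : ℕ, 1 ≤ i → i < m → x i < x (i + 1))
    (horb : {y | ∃ i : ℕ, 1 ≤ i ∧ i ≤ m ∧ y = x i} = {y | ∃ i < m, y = f^[i] p})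
    (hswap : ¬ (f '' {y | ∃ i : ℕ, 1 ≤ i ∧ i ≤ m / 2 ∧ y = x i} =
          {y | ∃ i : ℕ, m / 2 < i ∧ i ≤ m ∧ y = x i} ∧
        f '' {y | ∃ i : ℕ, m / 2 < i ∧ i ≤ m ∧ y = x i} =
          {y | ∃ i : ℕ, 1 ≤ i ∧ i ≤ m / 2 ∧ y = x i})) :
    ∃ y ∈ I, minimalPeriod f y = m - 1 := by
  simp only [setOf_exists_le_le_eq_image, setOf_exists_lt_le_eq_image] at horb hswap
  have hx : StrictMonoOn x (Icc 1 m) :=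
    strictMonoOn_of_lt_succ ordConnected_Icc fun i _ hi hi' => hmono i hi.1 hi'.2
  have h : IsOrderedOrbit f m x := .of_minimalPeriod_eq (by omega) hx hper horb
  have hxI : ∀ i ∈ Icc 1 m, x i ∈ I := fun i hi => by
    obtain ⟨k, -, hk⟩ := horb.subset (mem_image_of_mem x hi)
    exact hk ▸ hp k
  have hsub : Icc (x 1) (x m) ⊆ I :=
    hI.out (hxI 1 ⟨le_rfl, hm.le⟩) (hxI m ⟨hm.le, le_rfl⟩)
  obtain ⟨y, hy, hyper⟩ := h.exists_minimalPeriod_eq_sub_one hm (hcont.mono hsub) hswap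
  exact ⟨y, hsub hy, hyper⟩

theorem non_swapping_even_orbit_gives_odd_period (a b : ℝ) (hab : a ≤ b) (f : ℝ → ℝ)
    (hcont : ContinuousOn f (Set.Icc a b))
    (hmaps : Set.MapsTo f (Set.Icc a b) (Set.Icc a b))
    (m : ℕ) (hm : 4 ≤ m) (hme : Even m)
    (p : ℝ) (hp : p ∈ Set.Icc a b) (hper : PeriodPt f m p)
    (x : ℕ → ℝ) (hmono : ∀ i : ℕ, 1 ≤ i → i < m → x i < x (i + 1))
    (horb : {y | ∃ i : ℕ, 1 ≤ i ∧ i ≤ m ∧ y = x i} = {y | ∃ i < m, y = f^[i] p})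
    (hswap : ¬ (f '' {y | ∃ i : ℕ, 1 ≤ i ∧ i ≤ m / 2 ∧ y = x i} =
          {y | ∃ i : ℕ, m / 2 < i ∧ i ≤ m ∧ y = x i} ∧
        f '' {y | ∃ i : ℕ, m / 2 < i ∧ i ≤ m ∧ y = x i} =
          {y | ∃ i : ℕ, 1 ≤ i ∧ i ≤ m / 2 ∧ y = x i})) :
    ∃ y ∈ Set.Icc a b, PeriodPt f (m - 1) y := by
  obtain ⟨y, hy, hmin⟩ :=
    non_swapping_even_orbit_gives_odd_period_general Set.ordConnected_Icc hcont (by omega)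
      (fun i => hmaps.iterate i hp) ((periodPt_iff_minimalPeriod_eq (by omega)).1 hper)
      hmono horb hswap
  exact ⟨y, hy, (periodPt_iff_minimalPeriod_eq (by omega)).2 hmin⟩
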